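/- Let T > 0, let μ be a real constant, let a_ξ, b_ξ, η : [0,T] → ℝ be continuous with η(t) > 0 for all t, and let D, E, F, G, H, I, L, M, N, O, P, Q : [0,T) → ℝ be differentiable functions satisfying on [0,T): −D′ = −D²/η + μb_ξ²N²; −E′ = −F²/(4η) + 4μb_ξ²M²; −F′ = −DF/η + 4μb_ξ²MN + μ(T−t); −G′ = −DG/η + 2μb_ξ²NP + a_ξF; −H′ = −FG/(2η) + 4μb_ξ²MP + 2a_ξE; −I′ = b_ξ²E − G²/(4η) + μb_ξ²P² + a_ξH; −L′ = D²/η − 2DL/η; −M′ = F²/(4η) − FN/(2η); −N′ = DF/η − (DN+FL)/η; −O′ = (DG − DO − GL)/η + a_ξN; −P′ = (FG − FO − GN)/(2η) + 2a_ξM; −Q′ = G²/(4η) − GO/(2η) + a_ξP + b_ξ²M. Define C(x,ξ,t) = x²D(t) + ξ²E(t) + xξF(t) + xG(t) + ξH(t) + I(t) and f(x,ξ,t) = x²L(t) + ξ²M(t) + xξN(t) + xO(t) + ξP(t) + Q(t). Then for all x, ξ ∈ ℝ and t ∈ [0,T): 0 = (1/2)C_ξξ·b_ξ² + C_ξ·a_ξ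 + C_t − C_x²/(4η) + μ·ξ·x·(T−t) + μ·f_ξ²·b_ξ², and 0 = C_x²/(4η) + (1/2)f_ξξ·b_ξ² + f_ξ·a_ξ − C_x·f_x/(2η) + f_t. -/

import Mathlib

/-- Quadratic ansatz `(x, ξ, t) ↦ x²D(t) + ξ²E(t) + xξF(t) + xG(t) + ξH(t) + I(t)`. -/
noncomputable def quadAnsatz (D E F G H I : ℝ → ℝ) : ℝ → ℝ → ℝ → ℝ :=
  fun x ξ t => x ^ 2 * D t + ξ ^ 2 * E t + x * ξ * F t + x * G t + ξ * H t + I t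

/-- Partial derivative in the first (position) variable. -/
noncomputable def pdX (C : ℝ → ℝ → ℝ → ℝ) (x ξ t : ℝ) : ℝ := deriv (fun y => C y ξ t) x

/-- Partial derivative in the second (market-state) variable. -/
noncomputable def pdXi (C : ℝ → ℝ → ℝ → ℝ) (x ξ t : ℝ) : ℝ := deriv (fun z => C x z t) ξ

/-- Second partial derivative in the second (market-state) variable. -/
noncomputable def pdXiXi (C : ℝ → ℝ → ℝ → ℝ) (x ξ t : ℝ) : ℝ := deriv (fun z => pdXi C x z t) ξ

/-- Partial derivative in the time variable. -/
noncomputable def pdT (C : ℝ → ℝ → ℝ → ℝ) (x ξ t : ℝ) : ℝ := deriv (fun s => C x ξ s) t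

/-! On the quadratic ansatz the right-hand side of either equation is a polynomial of degree at most
two in `(x, ξ)`, and its six coefficients are exactly the defects of the corresponding differential
equations. A polynomial of this kind vanishes identically only if all its coefficients do, so at
each time the two equations hold for all `(x, ξ)` if and only if the twelve ODEs hold. -/

theorem forall_quadratic_eq_zero_iff {R : Type*} [CommRing R] [NoZeroDivisors R] [NeZero (2 : R)]
    {d e f g h i : R} :
    (∀ x y : R, x ^ 2 * d + y ^ 2 * e + x * y * f + x * g + y * h + i = 0) ↔
      d = 0 ∧ e = 0 ∧ f = 0 ∧ g = 0 ∧ h = 0 ∧ i = 0 := by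
  refine ⟨fun vanishes => ?_, fun ⟨hd, he, hf, hg, hh, hi⟩ x y => by
    simp only [hd, he, hf, hg, hh, hi, mul_zero, add_zero]⟩
  have hi : i = 0 := by linear_combination vanishes 0 0
  have hd : d = 0 := (mul_eq_zero_iff_left (two_ne_zero' R)).1 <| by
    linear_combination vanishes 1 0 + vanishes (-1) 0 - 2 * hi
  have he : e = 0 := (mul_eq_zero_iff_left (two_ne_zero' R)).1 <| by
    linear_combination vanishes 0 1 + vanishes 0 (-1) - 2 * hi
  have hg : g = 0 := by linear_combination vanishes 1 0 - hd - hi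
  have hh : h = 0 := by linear_combination vanishes 0 1 - he - hi
  have hf : f = 0 := by linear_combination vanishes 1 1 - hd - he - hg - hh - hi
  exact ⟨hd, he, hf, hg, hh, hi⟩

theorem hasDerivAt_quadratic {𝕜 : Type*} [NontriviallyNormedField 𝕜] (p q r x : 𝕜) :
    HasDerivAt (fun y => p * y ^ 2 + q * y + r) (2 * p * x + q) x :=
  (((hasDerivAt_pow 2 x).const_mul p).add (hasDerivAt_const_mul q)).add_const r
    |>.congr_deriv (by push_cast; ring)

section QuadraticAnsatz

variable (D E F G H I : ℝ → ℝ) (x ξ t : ℝ)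

theorem pdX_quadAnsatz :
    pdX (quadAnsatz D E F G H I) x ξ t = 2 * D t * x + (F t * ξ + G t) := by
  have quadratic_in_x : (fun y => quadAnsatz D E F G H I y ξ t) =
      fun y => D t * y ^ 2 + (F t * ξ + G t) * y + (ξ ^ 2 * E t + ξ * H t + I t) := by
    funext y
    simp only [quadAnsatz]
    ring
  rw [pdX, quadratic_in_x, (hasDerivAt_quadratic _ _ _ x).deriv]

theorem pdXi_quadAnsatz :
    pdXi (quadAnsatz D E F G H I) x ξ t = 2 * E t * ξ + (F t * x + H t) := by
  have quadratic_in_ξ : (fun z => quadAnsatz D E F G H I x z t) =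
      fun z => E t * z ^ 2 + (F t * x + H t) * z + (x ^ 2 * D t + x * G t + I t) := by
    funext z
    simp only [quadAnsatz]
    ring
  rw [pdXi, quadratic_in_ξ, (hasDerivAt_quadratic _ _ _ ξ).deriv]

theorem pdXiXi_quadAnsatz : pdXiXi (quadAnsatz D E F G H I) x ξ t = 2 * E t := by
  simp only [pdXiXi, pdXi_quadAnsatz]
  exact ((hasDerivAt_const_mul (2 * E t)).add_const (F t * x + H t)).deriv

variable {D E F G H I t} {D' E' F' G' H' I' : ℝ}

theorem pdT_quadAnsatz
    (hD : HasDerivAt D D' t) (hE : HasDerivAt E E' t) (hF : HasDerivAt F F' t)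
    (hG : HasDerivAt G G' t) (hH : HasDerivAt H H' t) (hI : HasDerivAt I I' t) :
    pdT (quadAnsatz D E F G H I) x ξ t =
      x ^ 2 * D' + ξ ^ 2 * E' + x * ξ * F' + x * G' + ξ * H' + I' :=
  ((((((hD.const_mul (x ^ 2)).add (hE.const_mul (ξ ^ 2))).add (hF.const_mul (x * ξ))).add
    (hG.const_mul x)).add (hH.const_mul ξ)).add hI).deriv

end QuadraticAnsatz

/-- The right-hand side of the HJB equation for the value function `C`, given the expected
remaining cost `f`; the equation says that it vanishes. The trading rate has already been
minimised out, which leaves the term `-C_x² / (4η)`, and `μ ξ x (T - t)` is the risk penalty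
`μ σ² x²`. -/
noncomputable def valueResidual (T μ : ℝ) (aξ bξ η : ℝ → ℝ) (C f : ℝ → ℝ → ℝ → ℝ)
    (x ξ t : ℝ) : ℝ :=
  (1 / 2) * pdXiXi C x ξ t * (bξ t) ^ 2 + pdXi C x ξ t * aξ t + pdT C x ξ t
    - (pdX C x ξ t) ^ 2 / (4 * η t) + μ * ξ * x * (T - t) + μ * (pdXi f x ξ t) ^ 2 * (bξ t) ^ 2

/-- The right-hand side of the equation for the expected remaining cost `f` under the optimal
trading rate `v* = C_x / (2η)`; the equation says that it vanishes. The terms `C_x² / (4η)` and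
`-C_x f_x / (2η)` are `η v*²` and `-v* f_x`. -/
noncomputable def costResidual (aξ bξ η : ℝ → ℝ) (C f : ℝ → ℝ → ℝ → ℝ) (x ξ t : ℝ) : ℝ :=
  (pdX C x ξ t) ^ 2 / (4 * η t) + (1 / 2) * pdXiXi f x ξ t * (bξ t) ^ 2 + pdXi f x ξ t * aξ t
    - pdX C x ξ t * pdX f x ξ t / (2 * η t) + pdT f x ξ t

section Reduction

variable (T μ : ℝ) (aξ bξ η : ℝ → ℝ) {t : ℝ} {D E F G H I L M N O P Q : ℝ → ℝ}
  {D' E' F' G' H' I' L' M' N' O' P' Q' : ℝ}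

theorem valueResidual_quadAnsatz_eq_zero_iff
    (hD : HasDerivAt D D' t) (hE : HasDerivAt E E' t) (hF : HasDerivAt F F' t)
    (hG : HasDerivAt G G' t) (hH : HasDerivAt H H' t) (hI : HasDerivAt I I' t) :
    (∀ x ξ, valueResidual T μ aξ bξ η (quadAnsatz D E F G H I) (quadAnsatz L M N O P Q) x ξ t
        = 0) ↔
      (-D' = -(D t) ^ 2 / η t + μ * (bξ t) ^ 2 * (N t) ^ 2) ∧
      (-E' = -(F t) ^ 2 / (4 * η t) + 4 * μ * (bξ t) ^ 2 * (M t) ^ 2) ∧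
      (-F' = -D t * F t / η t + 4 * μ * (bξ t) ^ 2 * M t * N t + μ * (T - t)) ∧
      (-G' = -D t * G t / η t + 2 * μ * (bξ t) ^ 2 * N t * P t + aξ t * F t) ∧
      (-H' = -F t * G t / (2 * η t) + 4 * μ * (bξ t) ^ 2 * M t * P t + 2 * aξ t * E t) ∧
      (-I' = (bξ t) ^ 2 * E t - (G t) ^ 2 / (4 * η t) + μ * (bξ t) ^ 2 * (P t) ^ 2
          + aξ t * H t) := by
  simp only [neg_eq_iff_add_eq_zero]
  rw [← forall_quadratic_eq_zero_iff]
  refine forall₂_congr fun x ξ => Eq.congr_left ?_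
  rw [valueResidual, pdXiXi_quadAnsatz, pdXi_quadAnsatz, pdXi_quadAnsatz, pdX_quadAnsatz,
    pdT_quadAnsatz x ξ hD hE hF hG hH hI]
  ring

theorem costResidual_quadAnsatz_eq_zero_iff
    (hL : HasDerivAt L L' t) (hM : HasDerivAt M M' t) (hN : HasDerivAt N N' t)
    (hO : HasDerivAt O O' t) (hP : HasDerivAt P P' t) (hQ : HasDerivAt Q Q' t) :
    (∀ x ξ, costResidual aξ bξ η (quadAnsatz D E F G H I) (quadAnsatz L M N O P Q) x ξ t = 0) ↔
      (-L' = (D t) ^ 2 / η t - 2 * D t * L t / η t) ∧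
      (-M' = (F t) ^ 2 / (4 * η t) - F t * N t / (2 * η t)) ∧
      (-N' = D t * F t / η t - (D t * N t + F t * L t) / η t) ∧
      (-O' = (D t * G t - D t * O t - G t * L t) / η t + aξ t * N t) ∧
      (-P' = (F t * G t - F t * O t - G t * N t) / (2 * η t) + 2 * aξ t * M t) ∧
      (-Q' = (G t) ^ 2 / (4 * η t) - G t * O t / (2 * η t) + aξ t * P t
          + (bξ t) ^ 2 * M t) := by
  simp only [neg_eq_iff_add_eq_zero]
  rw [← forall_quadratic_eq_zero_iff]
  refine forall₂_congr fun x ξ => Eq.congr_left ?_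
  rw [costResidual, pdX_quadAnsatz, pdX_quadAnsatz, pdXiXi_quadAnsatz, pdXi_quadAnsatz,
    pdT_quadAnsatz x ξ hL hM hN hO hP hQ]
  ring

theorem stochastic_vol_ODE_system_implies_HJB_general (_hη : η t ≠ 0)
    (hD : HasDerivAt D D' t) (hE : HasDerivAt E E' t) (hF : HasDerivAt F F' t)
    (hG : HasDerivAt G G' t) (hH : HasDerivAt H H' t) (hI : HasDerivAt I I' t)
    (hL : HasDerivAt L L' t) (hM : HasDerivAt M M' t) (hN : HasDerivAt N N' t)
    (hO : HasDerivAt O O' t) (hP : HasDerivAt P P' t) (hQ : HasDerivAt Q Q' t) :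
    (∀ x ξ,
      valueResidual T μ aξ bξ η (quadAnsatz D E F G H I) (quadAnsatz L M N O P Q) x ξ t = 0 ∧
      costResidual aξ bξ η (quadAnsatz D E F G H I) (quadAnsatz L M N O P Q) x ξ t = 0) ↔
      (-D' = -(D t) ^ 2 / η t + μ * (bξ t) ^ 2 * (N t) ^ 2) ∧
      (-E' = -(F t) ^ 2 / (4 * η t) + 4 * μ * (bξ t) ^ 2 * (M t) ^ 2) ∧
      (-F' = -D t * F t / η t + 4 * μ * (bξ t) ^ 2 * M t * N t + μ * (T - t)) ∧
      (-G' = -D t * G t / η t + 2 * μ * (bξ t) ^ 2 * N t * P t + aξ t * F t) ∧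
      (-H' = -F t * G t / (2 * η t) + 4 * μ * (bξ t) ^ 2 * M t * P t + 2 * aξ t * E t) ∧
      (-I' = (bξ t) ^ 2 * E t - (G t) ^ 2 / (4 * η t) + μ * (bξ t) ^ 2 * (P t) ^ 2
          + aξ t * H t) ∧
      (-L' = (D t) ^ 2 / η t - 2 * D t * L t / η t) ∧
      (-M' = (F t) ^ 2 / (4 * η t) - F t * N t / (2 * η t)) ∧
      (-N' = D t * F t / η t - (D t * N t + F t * L t) / η t) ∧
      (-O' = (D t * G t - D t * O t - G t * L t) / η t + aξ t * N t) ∧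
      (-P' = (F t * G t - F t * O t - G t * N t) / (2 * η t) + 2 * aξ t * M t) ∧
      (-Q' = (G t) ^ 2 / (4 * η t) - G t * O t / (2 * η t) + aξ t * P t
          + (bξ t) ^ 2 * M t) := by
  simp only [forall_and, valueResidual_quadAnsatz_eq_zero_iff T μ aξ bξ η hD hE hF hG hH hI,
    costResidual_quadAnsatz_eq_zero_iff aξ bξ η hL hM hN hO hP hQ, and_assoc]

end Reduction

/-- In the stochastic liquidity/volatility model, if the
coefficient functions `D, …, Q` solve the displayed ODE system on `[0,T)`,
then the quadratic ansätze `C` and `f` solve the two coupled HJB-type PDEs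
for all `x, ξ ∈ ℝ` and `t ∈ [0,T)`. -/
theorem stochastic_vol_ODE_system_implies_HJB
    (T μ : ℝ) (hT : 0 < T)
    (aξ bξ η : ℝ → ℝ)
    (haξ : ContinuousOn aξ (Set.Icc 0 T)) (hbξ : ContinuousOn bξ (Set.Icc 0 T))
    (hη : ContinuousOn η (Set.Icc 0 T))
    (hηpos : ∀ t ∈ Set.Icc (0 : ℝ) T, 0 < η t)
    (D E F G H I L M N O P Q D' E' F' G' H' I' L' M' N' O' P' Q' : ℝ → ℝ)
    (hD : ∀ t ∈ Set.Ico (0 : ℝ) T, HasDerivAt D (D' t) t)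
    (hE : ∀ t ∈ Set.Ico (0 : ℝ) T, HasDerivAt E (E' t) t)
    (hF : ∀ t ∈ Set.Ico (0 : ℝ) T, HasDerivAt F (F' t) t)
    (hG : ∀ t ∈ Set.Ico (0 : ℝ) T, HasDerivAt G (G' t) t)
    (hH : ∀ t ∈ Set.Ico (0 : ℝ) T, HasDerivAt H (H' t) t)
    (hI : ∀ t ∈ Set.Ico (0 : ℝ) T, HasDerivAt I (I' t) t)
    (hL : ∀ t ∈ Set.Ico (0 : ℝ) T, HasDerivAt L (L' t) t)
    (hM : ∀ t ∈ Set.Ico (0 : ℝ) T, HasDerivAt M (M' t) t)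
    (hN : ∀ t ∈ Set.Ico (0 : ℝ) T, HasDerivAt N (N' t) t)
    (hO : ∀ t ∈ Set.Ico (0 : ℝ) T, HasDerivAt O (O' t) t)
    (hP : ∀ t ∈ Set.Ico (0 : ℝ) T, HasDerivAt P (P' t) t)
    (hQ : ∀ t ∈ Set.Ico (0 : ℝ) T, HasDerivAt Q (Q' t) t)
    (hsys : ∀ t ∈ Set.Ico (0 : ℝ) T,
      (-D' t = -(D t) ^ 2 / η t + μ * (bξ t) ^ 2 * (N t) ^ 2) ∧
      (-E' t = -(F t) ^ 2 / (4 * η t) + 4 * μ * (bξ t) ^ 2 * (M t) ^ 2) ∧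
      (-F' t = -D t * F t / η t + 4 * μ * (bξ t) ^ 2 * M t * N t + μ * (T - t)) ∧
      (-G' t = -D t * G t / η t + 2 * μ * (bξ t) ^ 2 * N t * P t + aξ t * F t) ∧
      (-H' t = -F t * G t / (2 * η t) + 4 * μ * (bξ t) ^ 2 * M t * P t
          + 2 * aξ t * E t) ∧
      (-I' t = (bξ t) ^ 2 * E t - (G t) ^ 2 / (4 * η t)
          + μ * (bξ t) ^ 2 * (P t) ^ 2 + aξ t * H t) ∧
      (-L' t = (D t) ^ 2 / η t - 2 * D t * L t / η t) ∧
      (-M' t = (F t) ^ 2 / (4 * η t) - F t * N t / (2 * η t)) ∧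
      (-N' t = D t * F t / η t - (D t * N t + F t * L t) / η t) ∧
      (-O' t = (D t * G t - D t * O t - G t * L t) / η t + aξ t * N t) ∧
      (-P' t = (F t * G t - F t * O t - G t * N t) / (2 * η t)
          + 2 * aξ t * M t) ∧
      (-Q' t = (G t) ^ 2 / (4 * η t) - G t * O t / (2 * η t)
          + aξ t * P t + (bξ t) ^ 2 * M t)) :
    ∀ (x ξ : ℝ), ∀ t ∈ Set.Ico (0 : ℝ) T,
      (0 = (1 / 2) * pdXiXi (quadAnsatz D E F G H I) x ξ t * (bξ t) ^ 2
          + pdXi (quadAnsatz D E F G H I) x ξ t * aξ t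
          + pdT (quadAnsatz D E F G H I) x ξ t
          - (pdX (quadAnsatz D E F G H I) x ξ t) ^ 2 / (4 * η t)
          + μ * ξ * x * (T - t)
          + μ * (pdXi (quadAnsatz L M N O P Q) x ξ t) ^ 2 * (bξ t) ^ 2) ∧
      (0 = (pdX (quadAnsatz D E F G H I) x ξ t) ^ 2 / (4 * η t)
          + (1 / 2) * pdXiXi (quadAnsatz L M N O P Q) x ξ t * (bξ t) ^ 2
          + pdXi (quadAnsatz L M N O P Q) x ξ t * aξ t
          - pdX (quadAnsatz D E F G H I) x ξ t * pdX (quadAnsatz L M N O P Q) x ξ t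
              / (2 * η t)
          + pdT (quadAnsatz L M N O P Q) x ξ t) := by
  intro x ξ t ht
  have hηt : η t ≠ 0 := (hηpos t (Set.Ico_subset_Icc_self ht)).ne'
  obtain ⟨hvalue, hcost⟩ := (stochastic_vol_ODE_system_implies_HJB_general T μ aξ bξ η hηt
    (hD t ht) (hE t ht) (hF t ht) (hG t ht) (hH t ht) (hI t ht)
    (hL t ht) (hM t ht) (hN t ht) (hO t ht) (hP t ht) (hQ t ht)).2 (hsys t ht) x ξ
  exact ⟨hvalue.symm, hcost.symm⟩
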